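/- arXiv:2506.05032 — 6 statements merged into one kernel-verified Lean document; each statement's English description precedes it below -/
import Mathlib

section
/- Let x_{E,1}, x_{C,2}, x_{C,3} be real numbers, let w₁ ≥ 0, w₂ ≥ 0 and ε > 0. For δ = (δ₁, δ₂, δ₃, δ₄, δ₅, δ₆) ∈ ℝ⁶ define G(δ) = max( w₁δ₂ + w₂δ₄ + w₂(x_{C,3} + δ₆), w₁δ₃ + w₂δ₄ + w₂(x_{C,2} + δ₅) ) − w₁(x_{E,1} + δ₁) − w₂(x_{C,2} + δ₅) − w₂(x_{C,3} + δ₆). Then the supremum of G(δ) over all δ with ‖δ‖_∞ ≤ ε is attained at δ* = (−ε, ε, ε, ε, −ε, −ε); that is, G(δ) ≤ G(δ*) for all δ with max_i |δᵢ| ≤ ε. -/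
/-! The gap is the maximum, over the two wrong classes, of a difference of logits. In the
difference for class `2` the coordinate `x_{C,3}` cancels, and in that for class `3` the coordinate
`x_{C,2}` cancels. Both differences are then affine in `δ`, with nonnegative coefficients on
`δ₂, δ₃, δ₄` and nonpositive ones on `δ₁, δ₅, δ₆`, so the same corner of the cube maximizes both,
hence also their maximum. -/

/-- `G(δ) = max_{j≠1} f_w(x+δ)_j − f_w(x+δ)₁` for a class-1 sample with coordinates
`x_{E,1}, x_{C,2}, x_{C,3}` (the coordinates `x_{E,2} = x_{E,3} = x_{C,1} = 0`).
Here `δ = (δ₁, δ₂, δ₃, δ₄, δ₅, δ₆)` is indexed by `Fin 6` (so `δ 0 = δ₁`, …, `δ 5 = δ₆`). -/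
noncomputable def advGap (xE1 xC2 xC3 w1 w2 : ℝ) (δ : Fin 6 → ℝ) : ℝ :=
  max (w1 * δ 1 + w2 * δ 3 + w2 * (xC3 + δ 5))
      (w1 * δ 2 + w2 * δ 3 + w2 * (xC2 + δ 4))
    - w1 * (xE1 + δ 0) - w2 * (xC2 + δ 4) - w2 * (xC3 + δ 5)

/-- **Lemma 2.** The supremum of `G(δ)` over `‖δ‖_∞ ≤ ε` is attained at
`δ* = (−ε, ε, ε, ε, −ε, −ε)`. -/
theorem advGap_le_at_opt (xE1 xC2 xC3 w1 w2 ε : ℝ)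
    (hw1 : 0 ≤ w1) (hw2 : 0 ≤ w2) (hε : 0 < ε)
    (δ : Fin 6 → ℝ) (hδ : ∀ i, |δ i| ≤ ε) :
    advGap xE1 xC2 xC3 w1 w2 δ ≤
      advGap xE1 xC2 xC3 w1 w2 ![-ε, ε, ε, ε, -ε, -ε] := by
  have hle (i : Fin 6) : δ i ≤ ε := (abs_le.mp (hδ i)).2
  have hge (i : Fin 6) : -ε ≤ δ i := (abs_le.mp (hδ i)).1
  have h0 := mul_le_mul_of_nonneg_left (hge 0) hw1
  have h1 := mul_le_mul_of_nonneg_left (hle 1) hw1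
  have h2 := mul_le_mul_of_nonneg_left (hle 2) hw1
  have h3 := mul_le_mul_of_nonneg_left (hle 3) hw2
  have h4 := mul_le_mul_of_nonneg_left (hge 4) hw2
  have h5 := mul_le_mul_of_nonneg_left (hge 5) hw2
  -- In each branch of the maximum the term it shares with the subtracted first logit cancels,
  -- leaving an affine function whose coefficients have the signs that `δ*` maximizes.
  have key : max (w1 * δ 1 + w2 * δ 3 + w2 * (xC3 + δ 5))
        (w1 * δ 2 + w2 * δ 3 + w2 * (xC2 + δ 4)) ≤
      max (w1 * ε + w2 * ε + w2 * (xC3 + -ε)) (w1 * ε + w2 * ε + w2 * (xC2 + -ε))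
        - w1 * (xE1 + -ε) - w2 * (xC2 + -ε) - w2 * (xC3 + -ε)
        + w1 * (xE1 + δ 0) + w2 * (xC2 + δ 4) + w2 * (xC3 + δ 5) := by
    have m1 := le_max_left (w1 * ε + w2 * ε + w2 * (xC3 + -ε)) (w1 * ε + w2 * ε + w2 * (xC2 + -ε))
    have m2 := le_max_right (w1 * ε + w2 * ε + w2 * (xC3 + -ε)) (w1 * ε + w2 * ε + w2 * (xC2 + -ε))
    apply max_le <;> linarith
  change _ ≤ max (w1 * ε + w2 * ε + w2 * (xC3 + -ε)) (w1 * ε + w2 * ε + w2 * (xC2 + -ε))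
        - w1 * (xE1 + -ε) - w2 * (xC2 + -ε) - w2 * (xC3 + -ε)
  unfold advGap
  linarith
end

section
/- Let μ, σ, λ > 0 with σ < √π·μ, and define ε₀ = (μ − σ/√π)/2, so ε₀ ∈ (0, μ/2). For ε ∈ (0, μ/2), consider minimizing the function L(w₁, w₂) = (2ε − μ)·w₁ + (2ε − μ + σ/√π)·w₂ + (λ/2)(w₁² + w₂²) over w₁ ≥ 0, w₂ ≥ 0. Then: (i) if ε ∈ (0, ε₀), the unique minimizer satisfies w₂ = (μ − 2ε − σ/√π)/λ > 0; (ii) if ε ∈ (ε₀, μ/2), the unique minimizer satisfies w₂ = 0; (iii) for every ε ∈ (0, μ/2), the unique minimizer satisfies w₁ = (μ − 2ε)/λ > 0. -/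
/-!
The loss is separable: it is the sum of `a x + (lam / 2) x²` over the two coordinates. On the
half-line `x ≥ 0` such a quadratic is minimized at `m = max (-a / lam) 0`, and strong convexity gives
the excess bound `(lam / 2) (x - m)²` (`quadratic_growth`). Summing over the coordinates bounds the
excess loss below by `(lam / 2)` times the squared distance to the point of coordinatewise minima,
so that point is the unique minimizer. The three claims then follow by reading off the signs of the
linear coefficients, `2ε - μ < 0` always and `2ε - μ + σ/√π = 2 (ε - ε₀)`.
-/

/-- Quadratic growth of `a x + (lam / 2) x²` on `x ≥ 0` around its minimizer `max (-a / lam) 0`. -/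
lemma quadratic_growth {a lam x : ℝ} (hlam : 0 < lam) (hx : 0 ≤ x) :
    a * max (-a / lam) 0 + lam / 2 * max (-a / lam) 0 ^ 2
      + lam / 2 * (x - max (-a / lam) 0) ^ 2 ≤ a * x + lam / 2 * x ^ 2 := by
  -- The difference of the two sides is `(x - m) * (a + lam * m)`.
  rcases le_total a 0 with ha | ha
  · rw [max_eq_left (div_nonneg (neg_nonneg.mpr ha) hlam.le)]
    have h : a + lam * (-a / lam) = 0 := by field_simp; ring
    linear_combination -(x - -a / lam) * h
  · rw [max_eq_right (div_nonpos_of_nonpos_of_nonneg (neg_nonpos.mpr ha) hlam.le)]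
    nlinarith [mul_nonneg ha hx]

/-- **Theorem 1 (closed form).** Minimizing the regularized expected adversarial loss
`L(w₁, w₂) = (2ε − μ)w₁ + (2ε − μ + σ/√π)w₂ + (λ/2)(w₁² + w₂²)` over `w₁, w₂ ≥ 0`:
with `ε₀ = (μ − σ/√π)/2 ∈ (0, μ/2)`, the unique minimizer has
`w₂ = (μ − 2ε − σ/√π)/λ > 0` when `ε < ε₀`, `w₂ = 0` when `ε > ε₀`, and always
`w₁ = (μ − 2ε)/λ > 0`. -/
theorem at_abandons_cross_class_features
    (μ σ lam ε : ℝ) (hμ : 0 < μ) (hσ : 0 < σ) (hlam : 0 < lam)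
    (hσμ : σ < Real.sqrt Real.pi * μ) (hε0 : 0 < ε) (hεμ : ε < μ / 2) :
    let ε₀ : ℝ := (μ - σ / Real.sqrt Real.pi) / 2
    let L : ℝ × ℝ → ℝ := fun p =>
      (2 * ε - μ) * p.1 + (2 * ε - μ + σ / Real.sqrt Real.pi) * p.2
        + lam / 2 * (p.1 ^ 2 + p.2 ^ 2)
    (0 < ε₀ ∧ ε₀ < μ / 2) ∧
    (∃! p : ℝ × ℝ, 0 ≤ p.1 ∧ 0 ≤ p.2 ∧
        ∀ q : ℝ × ℝ, 0 ≤ q.1 → 0 ≤ q.2 → L p ≤ L q) ∧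
    (∀ p : ℝ × ℝ,
      (0 ≤ p.1 ∧ 0 ≤ p.2 ∧ ∀ q : ℝ × ℝ, 0 ≤ q.1 → 0 ≤ q.2 → L p ≤ L q) →
        (ε < ε₀ → p.2 = (μ - 2 * ε - σ / Real.sqrt Real.pi) / lam ∧ 0 < p.2) ∧
        (ε₀ < ε → p.2 = 0) ∧
        (p.1 = (μ - 2 * ε) / lam ∧ 0 < p.1)) := by
  intro ε₀ L
  have hpi : 0 < Real.sqrt Real.pi := Real.sqrt_pos.mpr Real.pi_pos
  have hs : 0 < σ / Real.sqrt Real.pi := div_pos hσ hpi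
  have hsμ : σ / Real.sqrt Real.pi < μ := by rwa [div_lt_iff₀' hpi]
  set s : ℝ := σ / Real.sqrt Real.pi
  have hε₀ : ε₀ = (μ - s) / 2 := rfl
  set m₁ : ℝ := max (-(2 * ε - μ) / lam) 0 with hm₁
  set m₂ : ℝ := max (-(2 * ε - μ + s) / lam) 0 with hm₂
  have growth : ∀ q : ℝ × ℝ, 0 ≤ q.1 → 0 ≤ q.2 →
      L (m₁, m₂) + lam / 2 * ((q.1 - m₁) ^ 2 + (q.2 - m₂) ^ 2) ≤ L q := by
    intro q h₁ h₂
    have g₁ := quadratic_growth (a := 2 * ε - μ) hlam h₁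
    have g₂ := quadratic_growth (a := 2 * ε - μ + s) hlam h₂
    simp only [L]
    linarith
  have hm₁0 : 0 ≤ m₁ := le_max_right _ _
  have hm₂0 : 0 ≤ m₂ := le_max_right _ _
  have unique : ∀ p : ℝ × ℝ,
      (0 ≤ p.1 ∧ 0 ≤ p.2 ∧ ∀ q : ℝ × ℝ, 0 ≤ q.1 → 0 ≤ q.2 → L p ≤ L q) → p = (m₁, m₂) := by
    rintro p ⟨h₁, h₂, hp⟩
    have hle : lam / 2 * ((p.1 - m₁) ^ 2 + (p.2 - m₂) ^ 2) ≤ 0 := by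
      linarith [growth p h₁ h₂, hp (m₁, m₂) hm₁0 hm₂0]
    have hsq : (p.1 - m₁) ^ 2 + (p.2 - m₂) ^ 2 ≤ 0 :=
      nonpos_of_mul_nonpos_right hle (half_pos hlam)
    have e₁ : p.1 - m₁ = 0 := by
      apply pow_eq_zero_iff two_ne_zero |>.mp
      linarith [sq_nonneg (p.1 - m₁), sq_nonneg (p.2 - m₂)]
    have e₂ : p.2 - m₂ = 0 := by
      apply pow_eq_zero_iff two_ne_zero |>.mp
      linarith [sq_nonneg (p.1 - m₁), sq_nonneg (p.2 - m₂)]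
    exact Prod.ext (sub_eq_zero.mp e₁) (sub_eq_zero.mp e₂)
  refine ⟨⟨by linarith, by linarith⟩, ⟨(m₁, m₂), ⟨hm₁0, hm₂0, fun q h₁ h₂ => ?_⟩, unique⟩, ?_⟩
  · have : 0 ≤ lam / 2 * ((q.1 - m₁) ^ 2 + (q.2 - m₂) ^ 2) := by positivity
    linarith [growth q h₁ h₂]
  · intro p hp
    rw [unique p hp]
    refine ⟨fun h => ?_, fun h => ?_, ?_⟩
    · have hpos : 0 < (μ - 2 * ε - s) / lam := div_pos (by linarith) hlam
      have e : m₂ = (μ - 2 * ε - s) / lam := by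
        rw [hm₂, show -(2 * ε - μ + s) = μ - 2 * ε - s by ring, max_eq_left hpos.le]
      exact ⟨e, e ▸ hpos⟩
    · exact max_eq_right (div_nonpos_of_nonpos_of_nonneg (by linarith) hlam.le)
    · have hpos : 0 < (μ - 2 * ε) / lam := div_pos (by linarith) hlam
      have e : m₁ = (μ - 2 * ε) / lam := by
        rw [hm₁, show -(2 * ε - μ) = μ - 2 * ε by ring, max_eq_left hpos.le]
      exact ⟨e, e ▸ hpos⟩
end

section
/- Let σ₁ > 0 and let X, Y be independent random variables, each distributed as N(1, σ₁²). For t ≥ 0 define u(t) = P(X + tY > 0). Then u is strictly increasing on the interval [0, 1]. -/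
/-!
Writing `s(t) = σ₁ √(1 + t²)`, the variable `X + tY` has law `N(1 + t, s(t)²)`, so after
standardization `u(t) = γ(-m(t), ∞)`, where `γ = N(0, 1)` and `m(t) = (1 + t) / s(t)`.
The tail `x ↦ γ(x, ∞)` is strictly decreasing because `γ` has a positive density, so it suffices
that `m` is strictly increasing on `[0, 1]`. This holds because
`σ₁² m(t)² = (1 + t)² / (1 + t²) = 1 + 2t / (1 + t²)`, and for `0 ≤ a < b ≤ 1` the inequality
`a (1 + b²) < b (1 + a²)` amounts to `0 < (b - a) (1 - a b)`.
-/

open MeasureTheory ProbabilityTheory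

lemma strictAnti_gaussianReal_Ioi :
    StrictAnti (fun x : ℝ => (gaussianReal 0 1 (Set.Ioi x)).toReal) := by
  intro a b hab
  have hpos : 0 < gaussianReal 0 1 (Set.Ioc a b) := by
    rw [pos_iff_ne_zero]
    intro h0
    have h1 := gaussianReal_absolutelyContinuous' 0 (one_ne_zero : (1 : NNReal) ≠ 0) h0
    rw [Real.volume_Ioc, ENNReal.ofReal_eq_zero] at h1
    linarith
  have hsplit : gaussianReal 0 1 (Set.Ioi a)
      = gaussianReal 0 1 (Set.Ioc a b) + gaussianReal 0 1 (Set.Ioi b) := by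
    rw [← Set.Ioc_union_Ioi_eq_Ioi hab.le]
    exact measure_union (Set.Ioc_disjoint_Ioi le_rfl) measurableSet_Ioi
  have hpos' := ENNReal.toReal_pos hpos.ne' (measure_ne_top _ _)
  simp only [hsplit]
  rw [ENNReal.toReal_add (measure_ne_top _ _) (measure_ne_top _ _)]
  linarith

/-- The ratio of mean to standard deviation of `X + tY` is strictly increasing on `[0, 1]`. -/
lemma strictMonoOn_mean_div_std {σ : ℝ} (hσ : 0 < σ) :
    StrictMonoOn (fun t : ℝ => (1 + t) / (σ * √(1 + t ^ 2))) (Set.Icc 0 1) := by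
  rintro a ⟨ha0, ha1⟩ b ⟨hb0, hb1⟩ hab
  have hsa : 0 < √(1 + a ^ 2) := Real.sqrt_pos.2 (by positivity)
  have hsb : 0 < √(1 + b ^ 2) := Real.sqrt_pos.2 (by positivity)
  have hab1 : a * b < 1 := by nlinarith
  have key : (1 + a) * √(1 + b ^ 2) < (1 + b) * √(1 + a ^ 2) := by
    refine lt_of_pow_lt_pow_left₀ 2 (by positivity) ?_
    rw [mul_pow, mul_pow, Real.sq_sqrt (by positivity), Real.sq_sqrt (by positivity)]
    nlinarith [mul_pos (sub_pos.2 hab) (sub_pos.2 hab1)]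
  change (1 + a) / (σ * √(1 + a ^ 2)) < (1 + b) / (σ * √(1 + b ^ 2))
  rw [div_lt_div_iff₀ (by positivity) (by positivity)]
  nlinarith [mul_lt_mul_of_pos_left key hσ]

/-- **Lemma 3.** If `X, Y` are independent with `X, Y ~ N(1, σ₁²)`, `σ₁ > 0`, then
`u(t) = P(X + tY > 0)` is strictly increasing on `[0, 1]`. -/
theorem prob_pos_combination_strictMonoOn
    {Ω : Type*} [MeasureSpace Ω] [IsProbabilityMeasure (ℙ : Measure Ω)]
    (σ1 : ℝ) (hσ1 : 0 < σ1)
    (X Y : Ω → ℝ) (hXm : Measurable X) (hYm : Measurable Y)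
    (hX : Measure.map X ℙ = gaussianReal 1 ⟨σ1 ^ 2, sq_nonneg σ1⟩)
    (hY : Measure.map Y ℙ = gaussianReal 1 ⟨σ1 ^ 2, sq_nonneg σ1⟩)
    (hXY : IndepFun X Y ℙ) :
    StrictMonoOn (fun t : ℝ => (ℙ {ω | X ω + t * Y ω > 0}).toReal)
      (Set.Icc 0 1) := by
  have hu : ∀ t : ℝ, (ℙ {ω | X ω + t * Y ω > 0}).toReal
      = (gaussianReal 0 1 (Set.Ioi (-((1 + t) / (σ1 * √(1 + t ^ 2)))))).toReal := by
    intro t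
    set s := σ1 * √(1 + t ^ 2) with hs
    have hspos : 0 < s := mul_pos hσ1 (Real.sqrt_pos.2 (by positivity))
    have hs2 : s ^ 2 = σ1 ^ 2 * (1 + t ^ 2) := by
      rw [hs, mul_pow, Real.sq_sqrt (by positivity)]
    have lX : HasLaw X (gaussianReal 1 ⟨σ1 ^ 2, sq_nonneg σ1⟩) ℙ := ⟨hXm.aemeasurable, hX⟩
    have lY : HasLaw Y (gaussianReal 1 ⟨σ1 ^ 2, sq_nonneg σ1⟩) ℙ := ⟨hYm.aemeasurable, hY⟩
    have hind : IndepFun X (fun ω => t * Y ω) ℙ :=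
      hXY.comp measurable_id (measurable_const_mul t)
    have lsum : HasLaw (X + fun ω => t * Y ω) _ ℙ :=
      ⟨by fun_prop,
        gaussianReal_add_gaussianReal_of_indepFun hind hX (gaussianReal_const_mul lY t).map_eq⟩
    have lZ := gaussianReal_sub_const (gaussianReal_div_const lsum s) ((1 + t) / s)
    have hZ : Measure.map (fun ω => (X ω + t * Y ω) / s - (1 + t) / s) ℙ = gaussianReal 0 1 := by
      refine lZ.map_eq.trans ?_
      congr 1
      · ring
      · ext
        change (σ1 ^ 2 + t ^ 2 * σ1 ^ 2) / s ^ 2 = 1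
        rw [hs2]
        field_simp
    rw [← hZ, Measure.map_apply (by fun_prop) measurableSet_Ioi]
    congr 2
    ext ω
    simp only [Set.mem_ofPred_eq, Set.mem_preimage, Set.mem_Ioi, gt_iff_lt]
    rw [neg_lt_sub_iff_lt_add, lt_add_iff_pos_right, div_pos_iff_of_pos_right hspos]
  intro a ha b hb hab
  simp only [hu]
  exact strictAnti_gaussianReal_Ioi (neg_lt_neg (strictMonoOn_mean_div_std hσ1 ha hb hab))
end

section
/- Let m > 0, σ > 0, w₁ > 0, and let U, V be independent random variables, each distributed as N(m, σ²). Then the function w₂ ↦ P(w₁·U + w₂·V > 0) is strictly increasing on the interval [0, w₁]. -/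
/-!
Rescaling `w₁U + w₂V` by `r = √(w₁² + w₂²)` does not change its sign, and turns it into a Gaussian
of variance `σ²`, whatever `w₂` is, with mean `m (w₁ + w₂) / r`. Hence `P(w₁U + w₂V > 0)` is the
`N(0, σ²)`-mass of the half-line `(-m (w₁ + w₂) / r, ∞)` (`prob_eq_gaussianReal_Ioi`).
The mass of a half-line is strictly decreasing in its endpoint, since a nondegenerate Gaussian
charges every nonempty open interval (`gaussianReal_Ioi_strictAnti`), and
`(w₁ + w₂)² / (w₁² + w₂²) = 1 + 2 w₁ w₂ / (w₁² + w₂²)` is strictly increasing in `w₂` on `[0, w₁]`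
(`ratio_lt_ratio`).
-/

open MeasureTheory ProbabilityTheory
open scoped NNReal

/-- For `x < y` in `[0, w]`, the cross-multiplied squares differ by
`2 w (y - x) (w² - x y) > 0`. -/
lemma ratio_lt_ratio {w x y : ℝ} (hw : 0 < w) (hx : 0 ≤ x) (hxy : x < y) (hy : y ≤ w) :
    (w + x) / √(w ^ 2 + x ^ 2) < (w + y) / √(w ^ 2 + y ^ 2) := by
  have hx2 : 0 < w ^ 2 + x ^ 2 := by positivity
  have hy2 : 0 < w ^ 2 + y ^ 2 := by positivity
  have hy0 : 0 < y := hx.trans_lt hxy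
  refine lt_of_pow_lt_pow_left₀ 2 (by positivity) ?_
  rw [div_pow, div_pow, Real.sq_sqrt hx2.le, Real.sq_sqrt hy2.le, div_lt_div_iff₀ hx2 hy2]
  have hprod : x * y < w ^ 2 := by nlinarith
  have hpos : 0 < 2 * w * (y - x) * (w ^ 2 - x * y) :=
    mul_pos (mul_pos (by positivity) (sub_pos.2 hxy)) (sub_pos.2 hprod)
  nlinarith

lemma gaussianReal_Ioi_strictAnti (μ : ℝ) {v : ℝ≥0} (hv : v ≠ 0) :
    StrictAnti fun a : ℝ => (gaussianReal μ v (Set.Ioi a)).toReal := by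
  intro a b hab
  have hpos : gaussianReal μ v (Set.Ioc a b) ≠ 0 := fun h => by
    have h0 := gaussianReal_absolutelyContinuous' μ hv h
    rw [Real.volume_Ioc, ENNReal.ofReal_eq_zero] at h0
    linarith
  have hsplit : gaussianReal μ v (Set.Ioi a)
      = gaussianReal μ v (Set.Ioc a b) + gaussianReal μ v (Set.Ioi b) := by
    rw [← measure_union (Set.Ioc_disjoint_Ioi le_rfl) measurableSet_Ioi,
      Set.Ioc_union_Ioi_eq_Ioi hab.le]
  simp only [hsplit, ENNReal.toReal_add (measure_ne_top _ _) (measure_ne_top _ _)]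
  linarith [ENNReal.toReal_pos hpos (measure_ne_top _ _)]

lemma prob_eq_gaussianReal_Ioi {Ω : Type*} [MeasurableSpace Ω] {P : Measure Ω}
    {m w x : ℝ} {v : ℝ≥0} (hw : 0 < w) {U V : Ω → ℝ}
    (hU : HasLaw U (gaussianReal m v) P) (hV : HasLaw V (gaussianReal m v) P)
    (hUV : IndepFun U V P) :
    P {ω | w * U ω + x * V ω > 0}
      = gaussianReal 0 v (Set.Ioi (-(m * ((w + x) / √(w ^ 2 + x ^ 2))))) := by
  have hs : 0 < w ^ 2 + x ^ 2 := by positivity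
  set r := √(w ^ 2 + x ^ 2) with hr
  have hr0 : 0 < r := Real.sqrt_pos.2 hs
  have hr2 : r ^ 2 = w ^ 2 + x ^ 2 := Real.sq_sqrt hs.le
  have hsum := gaussianReal_add_gaussianReal_of_indepFun
    (hUV.comp (measurable_const_mul (w / r)) (measurable_const_mul (x / r)))
    (gaussianReal_const_mul hU (w / r)).map_eq (gaussianReal_const_mul hV (x / r)).map_eq
  have hvar : NNReal.mk ((w / r) ^ 2) (sq_nonneg _) * v + NNReal.mk ((x / r) ^ 2) (sq_nonneg _) * v = v := by
    apply NNReal.eq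
    push_cast
    rw [← add_mul, div_pow, div_pow, ← add_div, ← hr2, div_self (by positivity), one_mul]
  rw [hvar] at hsum
  have hlaw : HasLaw (fun ω => w / r * U ω + x / r * V ω)
      (gaussianReal (w / r * m + x / r * m) v) P :=
    ⟨by have := hU.aemeasurable; have := hV.aemeasurable; fun_prop, hsum⟩
  have hcent := gaussianReal_sub_const hlaw (w / r * m + x / r * m)
  rw [sub_self] at hcent
  rw [← hcent.map_eq, Measure.map_apply_of_aemeasurable hcent.aemeasurable measurableSet_Ioi]
  congr 1
  ext ω
  have hlin : w / r * U ω + x / r * V ω = (w * U ω + x * V ω) / r := by ring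
  have hmean : w / r * m + x / r * m = m * ((w + x) / r) := by ring
  rw [Set.mem_ofPred_eq, Set.mem_preimage, Set.mem_Ioi, hlin, hmean, gt_iff_lt,
    neg_lt_sub_iff_lt_add, lt_add_iff_pos_right, div_pos_iff_of_pos_right hr0]

/-- If `U, V` are independent with `U, V ~ N(m, σ²)`, `m > 0`, `σ > 0`, and `w₁ > 0`,
then `w₂ ↦ P(w₁U + w₂V > 0)` is strictly increasing on `[0, w₁]`. -/
theorem prob_robust_pairwise_strictMonoOn
    {Ω : Type*} [MeasureSpace Ω] [IsProbabilityMeasure (ℙ : Measure Ω)]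
    (m σ w1 : ℝ) (hm : 0 < m) (hσ : 0 < σ) (hw1 : 0 < w1)
    (U V : Ω → ℝ) (hUm : Measurable U) (hVm : Measurable V)
    (hU : Measure.map U ℙ = gaussianReal m ⟨σ ^ 2, sq_nonneg σ⟩)
    (hV : Measure.map V ℙ = gaussianReal m ⟨σ ^ 2, sq_nonneg σ⟩)
    (hUV : IndepFun U V ℙ) :
    StrictMonoOn (fun w2 : ℝ => (ℙ {ω | w1 * U ω + w2 * V ω > 0}).toReal)
      (Set.Icc 0 w1) := by
  intro x hx y hy hxy
  have hv : (⟨σ ^ 2, sq_nonneg σ⟩ : ℝ≥0) ≠ 0 := fun h =>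
    (pow_pos hσ 2).ne' (congrArg NNReal.toReal h)
  have hlaw : ∀ z, (ℙ {ω | w1 * U ω + z * V ω > 0}).toReal = _ := fun z =>
    congrArg ENNReal.toReal (prob_eq_gaussianReal_Ioi (x := z) hw1 ⟨hUm.aemeasurable, hU⟩
      ⟨hVm.aemeasurable, hV⟩ hUV)
  simp only [hlaw]
  exact gaussianReal_Ioi_strictAnti 0 hv
    (neg_lt_neg (mul_lt_mul_of_pos_left (ratio_lt_ratio hw1 hx.1 hxy hy.2) hm))
end

section
/- Let μ, σ, λ > 0 with σ < √π·μ, let 0 < β < 1/3, and define ε₀ = (μ − σ/√π)/2 and ε₁ = ( μ/(1−β) − σ/√π )/2. Then ε₁ > ε₀ > 0. Moreover, for ε ∈ (0, μ/2), consider minimizing L_LS(w₁, w₂) = ( −(1−β)μ + (2−3β)ε )·w₁ + ( (1−β)(2ε + σ/√π) − μ )·w₂ + (λ/2)(w₁² + w₂²) over w₁ ≥ 0, w₂ ≥ 0. Then: (i) if ε ∈ (0, ε₁) ∩ (0, μ/2), the unique minimizer satisfies w₂ = ( μ − (1−β)(2ε + σ/√π) )/λ > 0; (ii) if ε ∈ (ε₁,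 μ/2), the unique minimizer satisfies w₂ = 0. -/
/-!
The loss is separable: it is a sum of two one-variable quadratics `a * x + lam / 2 * x ^ 2`, each
minimized over the half-line `x ≥ 0`. Such a quadratic is strongly convex, so its constrained
minimizer is unique and is the projection `max 0 (-a / lam)` of the unconstrained one; the lemma
`quad_growth` expresses this as a quadratic growth bound around that point. Hence the minimizer of
the loss is known explicitly (`isMin_iff`), and everything else is the sign of the coefficient
`(1 - β) * (2 * ε + σ / √π) - μ` of `w₂`, which is negative exactly when `ε < ε₁`.
-/

/-- Quadratic growth of `a * x + lam / 2 * x ^ 2` on `x ≥ 0` around `m = max 0 (-a / lam)`: the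
difference of the two sides is `(a + lam * m) * (x - m)`, where `a + lam * m ≥ 0` vanishes
unless `m = 0`. -/
lemma quad_growth (a lam x : ℝ) (hlam : 0 < lam) (hx : 0 ≤ x) :
    a * max 0 (-a / lam) + lam / 2 * max 0 (-a / lam) ^ 2
        + lam / 2 * (x - max 0 (-a / lam)) ^ 2 ≤ a * x + lam / 2 * x ^ 2 := by
  rcases le_total 0 a with ha | ha
  · rw [max_eq_left (div_nonpos_of_nonpos_of_nonneg (by linarith) hlam.le)]
    nlinarith [mul_nonneg ha hx]
  · rw [max_eq_right (div_nonneg (by linarith) hlam.le)]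
    apply le_of_eq
    field_simp
    ring

lemma isMin_iff (a b lam : ℝ) (hlam : 0 < lam) (p : ℝ × ℝ) :
    (0 ≤ p.1 ∧ 0 ≤ p.2 ∧ ∀ q : ℝ × ℝ, 0 ≤ q.1 → 0 ≤ q.2 →
      a * p.1 + b * p.2 + lam / 2 * (p.1 ^ 2 + p.2 ^ 2)
        ≤ a * q.1 + b * q.2 + lam / 2 * (q.1 ^ 2 + q.2 ^ 2)) ↔
      p = (max 0 (-a / lam), max 0 (-b / lam)) := by
  constructor
  · rintro ⟨h1, h2, h⟩
    have hq := h (max 0 (-a / lam), max 0 (-b / lam)) (le_max_left _ _) (le_max_left _ _)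
    have g1 := quad_growth a lam p.1 hlam h1
    have g2 := quad_growth b lam p.2 hlam h2
    dsimp only at hq
    have n1 := sq_nonneg (p.1 - max 0 (-a / lam))
    have n2 := sq_nonneg (p.2 - max 0 (-b / lam))
    have hs : lam * ((p.1 - max 0 (-a / lam)) ^ 2 + (p.2 - max 0 (-b / lam)) ^ 2) ≤ 0 := by
      linarith
    have hs' := nonpos_of_mul_nonpos_right hs hlam
    have e1 : (p.1 - max 0 (-a / lam)) ^ 2 = 0 := by linarith
    have e2 : (p.2 - max 0 (-b / lam)) ^ 2 = 0 := by linarith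
    exact Prod.ext (sub_eq_zero.mp (pow_eq_zero_iff two_ne_zero |>.mp e1))
      (sub_eq_zero.mp (pow_eq_zero_iff two_ne_zero |>.mp e2))
  · rintro rfl
    refine ⟨le_max_left _ _, le_max_left _ _, fun q h1 h2 => ?_⟩
    have g1 := quad_growth a lam q.1 hlam h1
    have g2 := quad_growth b lam q.2 hlam h2
    have n1 := mul_nonneg hlam.le (sq_nonneg (q.1 - max 0 (-a / lam)))
    have n2 := mul_nonneg hlam.le (sq_nonneg (q.2 - max 0 (-b / lam)))
    dsimp only
    linarith

/-- **Theorem 3 (closed form).** For the label-smoothed loss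
`L_LS(w₁, w₂) = (−(1−β)μ + (2−3β)ε)w₁ + ((1−β)(2ε + σ/√π) − μ)w₂ + (λ/2)(w₁² + w₂²)`
minimized over `w₁, w₂ ≥ 0`: the threshold `ε₁ = (μ/(1−β) − σ/√π)/2` satisfies
`ε₁ > ε₀ > 0` where `ε₀ = (μ − σ/√π)/2`, and the unique minimizer has
`w₂ = (μ − (1−β)(2ε + σ/√π))/λ > 0` for `ε ∈ (0, ε₁) ∩ (0, μ/2)` and `w₂ = 0`
for `ε ∈ (ε₁, μ/2)`. -/
theorem label_smoothing_preserves_cross_class_features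
    (μ σ lam β : ℝ) (hμ : 0 < μ) (hσ : 0 < σ) (hlam : 0 < lam)
    (hσμ : σ < Real.sqrt Real.pi * μ) (hβ0 : 0 < β) (hβ : β < 1 / 3) :
    let ε₀ : ℝ := (μ - σ / Real.sqrt Real.pi) / 2
    let ε₁ : ℝ := (μ / (1 - β) - σ / Real.sqrt Real.pi) / 2
    (ε₁ > ε₀ ∧ ε₀ > 0) ∧
    ∀ ε : ℝ, 0 < ε → ε < μ / 2 →
      let LLS : ℝ × ℝ → ℝ := fun p =>
        (-(1 - β) * μ + (2 - 3 * β) * ε) * p.1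
          + ((1 - β) * (2 * ε + σ / Real.sqrt Real.pi) - μ) * p.2
          + lam / 2 * (p.1 ^ 2 + p.2 ^ 2)
      (∃! p : ℝ × ℝ, 0 ≤ p.1 ∧ 0 ≤ p.2 ∧
          ∀ q : ℝ × ℝ, 0 ≤ q.1 → 0 ≤ q.2 → LLS p ≤ LLS q) ∧
      ∀ p : ℝ × ℝ,
        (0 ≤ p.1 ∧ 0 ≤ p.2 ∧ ∀ q : ℝ × ℝ, 0 ≤ q.1 → 0 ≤ q.2 → LLS p ≤ LLS q) →
          (ε < ε₁ →
            p.2 = (μ - (1 - β) * (2 * ε + σ / Real.sqrt Real.pi)) / lam ∧ 0 < p.2) ∧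
          (ε₁ < ε → p.2 = 0) := by
  intro ε₀ ε₁
  have hβ1 : 0 < 1 - β := by linarith
  have hπ : 0 < Real.sqrt Real.pi := Real.sqrt_pos.mpr Real.pi_pos
  refine ⟨⟨?_, ?_⟩, ?_⟩
  · have : μ < μ / (1 - β) := by
      rw [lt_div_iff₀ hβ1]
      nlinarith [mul_pos hμ hβ0]
    simp only [ε₀, ε₁]
    linarith
  · have : σ / Real.sqrt Real.pi < μ := by
      rw [div_lt_iff₀ hπ]
      linarith
    simp only [ε₀]
    linarith
  · intro ε _ _ LLS
    have key := isMin_iff (-(1 - β) * μ + (2 - 3 * β) * ε)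
      ((1 - β) * (2 * ε + σ / Real.sqrt Real.pi) - μ) lam hlam
    refine ⟨⟨_, (key _).mpr rfl, fun p hp => (key p).mp hp⟩, fun p hp => ?_⟩
    have hp2 := congrArg Prod.snd ((key p).mp hp)
    dsimp only at hp2
    refine ⟨fun h => ?_, fun h => ?_⟩
    · have h' : 2 * ε + σ / Real.sqrt Real.pi < μ / (1 - β) := by
        simp only [ε₁] at h
        linarith
      rw [lt_div_iff₀ hβ1] at h'
      have hpos : 0 < (μ - (1 - β) * (2 * ε + σ / Real.sqrt Real.pi)) / lam :=
        div_pos (by linarith) hlam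
      rw [neg_sub, max_eq_right hpos.le] at hp2
      exact ⟨hp2, hp2 ▸ hpos⟩
    · have h' : μ / (1 - β) < 2 * ε + σ / Real.sqrt Real.pi := by
        simp only [ε₁] at h
        linarith
      rw [div_lt_iff₀ hβ1] at h'
      rw [hp2]
      exact max_eq_left (div_nonpos_of_nonpos_of_nonneg (by linarith) hlam.le)
end

section
/- Let μ, σ, λ > 0 with σ < √π·μ, let 0 < β < 1/3, and define ε₁ = ( μ/(1−β) − σ/√π )/2. For ε ∈ (0, μ/2), let w₂*(ε) = max(0, μ − 2ε − σ/√π)/λ be the cross-class weight returned by minimizing the vanilla adversarial training loss L(w₁, w₂) = (2ε − μ)w₁ + (2ε − μ + σ/√π)w₂ + (λ/2)(w₁² + w₂²) over w₁, w₂ ≥ 0, and let w₂^{LS}(ε) = max(0, μ − (1−β)(2ε + σ/√π))/λ be the cross-class weight returned by minimizing the label-smoothed loss L_LS(w₁, w₂) = ( −(1−β)μ + (2−3β)ε )w₁ + ( (1−β)(2ε + σ/√π) − μ )w₂ + (λ/2)(w₁² + w₂²) over w₁, w₂ ≥ 0. Then for every ε ∈ (0, ε₁) ∩ (0, μ/2),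 w₂^{LS}(ε) > w₂*(ε). -/
/-!
Both losses are separable, so the second coordinate of a minimizer over the quadrant minimizes
a one-variable quadratic `c t + (lam / 2) t²` over `t ≥ 0`; by strong convexity its only minimizer
is `max 0 (-c) / lam`. With `s = 2 ε + σ / √π > 0`, the two weights are `max 0 (μ - s) / lam` and
`max 0 (μ - (1 - β) s) / lam`. The bound `ε < ε₁` says `(1 - β) s < μ`, so the second is positive,
and `(1 - β) s < s` makes it the larger one.
-/

/-- The only possible minimizer of `c t + (lam / 2) t²` over `t ≥ 0` is the projected critical
point `max 0 (-c) / lam`. -/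
lemma eq_max_div_of_isMin_quadratic {c lam y : ℝ} (hlam : 0 < lam) (hy : 0 ≤ y)
    (h : ∀ t : ℝ, 0 ≤ t → c * y + lam / 2 * y ^ 2 ≤ c * t + lam / 2 * t ^ 2) :
    y = max 0 (-c) / lam := by
  set m := max 0 (-c) / lam with hm
  have hm0 : 0 ≤ m := div_nonneg (le_max_left _ _) hlam.le
  have hlm : lam * m = max 0 (-c) := by rw [hm]; field_simp
  -- First-order optimality of `m`: nonnegative derivative and complementary slackness.
  have hd : 0 ≤ c + lam * m := by
    have := le_max_right 0 (-c)
    linarith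
  have hs : (c + lam * m) * m = 0 := by
    rcases max_choice 0 (-c) with h0 | h0
    · have : m = 0 := by rw [hm, h0, zero_div]
      simp [this]
    · rw [hlm, h0]; ring
  have hle := h m hm0
  have hsq : lam * (y - m) ^ 2 ≤ 0 := by nlinarith [mul_nonneg hd hy]
  have hz : (y - m) ^ 2 = 0 :=
    le_antisymm (nonpos_of_mul_nonpos_right hsq hlam) (sq_nonneg _)
  exact sub_eq_zero.mp (pow_eq_zero_iff two_ne_zero |>.mp hz)

/-- **Corollary 1.** Let `w₂*(ε) = max(0, μ − 2ε − σ/√π)/λ` be the cross-class weight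
returned by minimizing the vanilla adversarial training loss
`L(w₁,w₂) = (2ε − μ)w₁ + (2ε − μ + σ/√π)w₂ + (λ/2)(w₁² + w₂²)` over `w₁, w₂ ≥ 0`, and
`w₂^LS(ε) = max(0, μ − (1−β)(2ε + σ/√π))/λ` be the one returned by minimizing the
label-smoothed loss
`L_LS(w₁,w₂) = (−(1−β)μ + (2−3β)ε)w₁ + ((1−β)(2ε + σ/√π) − μ)w₂ + (λ/2)(w₁² + w₂²)`.
Then for every `ε ∈ (0, ε₁) ∩ (0, μ/2)`, `w₂^LS(ε) > w₂*(ε)`. -/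
theorem label_smoothing_returns_larger_cross_class_weight
    (μ σ lam β : ℝ) (hμ : 0 < μ) (hσ : 0 < σ) (hlam : 0 < lam)
    (hσμ : σ < Real.sqrt Real.pi * μ) (hβ0 : 0 < β) (hβ : β < 1 / 3) :
    let ε₁ : ℝ := (μ / (1 - β) - σ / Real.sqrt Real.pi) / 2
    let w₂star : ℝ → ℝ := fun ε => max 0 (μ - 2 * ε - σ / Real.sqrt Real.pi) / lam
    let w₂LS : ℝ → ℝ := fun ε =>
      max 0 (μ - (1 - β) * (2 * ε + σ / Real.sqrt Real.pi)) / lam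
    ∀ ε : ℝ, 0 < ε → ε < ε₁ → ε < μ / 2 →
      let L : ℝ × ℝ → ℝ := fun p =>
        (2 * ε - μ) * p.1 + (2 * ε - μ + σ / Real.sqrt Real.pi) * p.2
          + lam / 2 * (p.1 ^ 2 + p.2 ^ 2)
      let LLS : ℝ × ℝ → ℝ := fun p =>
        (-(1 - β) * μ + (2 - 3 * β) * ε) * p.1
          + ((1 - β) * (2 * ε + σ / Real.sqrt Real.pi) - μ) * p.2
          + lam / 2 * (p.1 ^ 2 + p.2 ^ 2)
      (∀ p : ℝ × ℝ,
        (0 ≤ p.1 ∧ 0 ≤ p.2 ∧ ∀ q : ℝ × ℝ, 0 ≤ q.1 → 0 ≤ q.2 → L p ≤ L q) →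
          p.2 = w₂star ε) ∧
      (∀ p : ℝ × ℝ,
        (0 ≤ p.1 ∧ 0 ≤ p.2 ∧ ∀ q : ℝ × ℝ, 0 ≤ q.1 → 0 ≤ q.2 → LLS p ≤ LLS q) →
          p.2 = w₂LS ε) ∧
      w₂LS ε > w₂star ε := by
  intro ε₁ w₂star w₂LS ε hε hε₁ _ L LLS
  have hr : 0 < σ / Real.sqrt Real.pi := div_pos hσ (Real.sqrt_pos.mpr Real.pi_pos)
  refine ⟨?_, ?_, ?_⟩
  · rintro ⟨x, y⟩ ⟨hx, hy, hmin⟩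
    have := eq_max_div_of_isMin_quadratic
      (c := 2 * ε - μ + σ / Real.sqrt Real.pi) hlam hy (fun t ht => by
        have := hmin (x, t) hx ht
        simp only [L] at this
        linarith)
    simp only [w₂star]
    refine this.trans ?_
    congr 2
    ring
  · rintro ⟨x, y⟩ ⟨hx, hy, hmin⟩
    have := eq_max_div_of_isMin_quadratic
      (c := (1 - β) * (2 * ε + σ / Real.sqrt Real.pi) - μ) hlam hy (fun t ht => by
        have := hmin (x, t) hx ht
        simp only [LLS] at this
        linarith)
    simp only [w₂LS]
    refine this.trans ?_
    congr 2
    ring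
  · simp only [w₂LS, w₂star, gt_iff_lt]
    simp only [ε₁] at hε₁
    have hb : 0 < 1 - β := by linarith
    have hpos : (2 * ε + σ / Real.sqrt Real.pi) * (1 - β) < μ := by
      rw [← lt_div_iff₀ hb]
      linarith
    have hβs : 0 < β * (2 * ε + σ / Real.sqrt Real.pi) := mul_pos hβ0 (by linarith)
    refine div_lt_div_of_pos_right ?_ hlam
    exact lt_max_of_lt_right (max_lt (by linarith) (by linarith))
end
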